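/- (Lemma 1) A hybrid logic formula φ is valid (true at every world of every model) if and only if φ is valid over the class of named models, i.e., M ⊨ φ for every named model M. -/

import Mathlib

/-- Hybrid logic formulas over nominals `ℕ` and propositional variables `ℕ`
(the two sorts are kept disjoint by the constructors). -/
inductive Form : Type where
  | prop : ℕ → Form
  | nom : ℕ → Form
  | rel : ℕ → ℕ → Form
  | and : Form → Form → Form
  | or : Form → Form → Form
  | imp : Form → Form → Form
  | neg : Form → Form
  | at_ : ℕ → Form → Form
  | box : Form → Form
  | dia : Form → Form

/-- A model for hybrid logic: a nonempty set of worlds, an accessibility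
relation, a valuation and an assignment of nominals to worlds. -/
structure Model where
  W : Type
  ne : Nonempty W
  R : W → W → Prop
  V : ℕ → W → Prop
  g : ℕ → W

/-- Satisfaction of a formula at a world of a model. -/
def sat (M : Model) : M.W → Form → Prop
  | w, .prop p => M.V p w
  | w, .nom i => M.g i = w
  | _, .rel i j => M.R (M.g i) (M.g j)
  | w, .and φ ψ => sat M w φ ∧ sat M w ψ
  | w, .or φ ψ => sat M w φ ∨ sat M w ψ
  | w, .imp φ ψ => ¬ sat M w φ ∨ sat M w ψ
  | w, .neg φ => ¬ sat M w φ
  | _, .at_ i φ => sat M (M.g i) φ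
  | w, .box φ => ∀ v, M.R w v → sat M v φ
  | w, .dia φ => ∃ v, M.R w v ∧ sat M v φ

/-- A model is named iff every world has a name, i.e. the assignment is surjective. -/
def Model.Named (M : Model) : Prop := Function.Surjective M.g

/-- A formula is valid iff it is true at every world of every model. -/
def Valid (φ : Form) : Prop := ∀ (M : Model) (w : M.W), sat M w φ

/-!
A world `w` refuting `φ` can be moved to a named model in two steps. Formulas form a countable set,
so closing `w` and the denotations of all nominals under a choice of witnesses for true formulas
`◇ψ` gives a countable submodel satisfying the same formulas (downward Löwenheim–Skolem). Only
finitely many nominals occur in `φ`; the infinitely many others can be reassigned so as to name all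
worlds of this countable submodel without affecting the truth of `φ`.
-/

section Functions

variable {α β ι : Type*}

theorem exists_countable_superset_forall_mapsTo [Countable ι] (f : ι → α → α) {A : Set α}
    (hA : A.Countable) :
    ∃ B, A ⊆ B ∧ B.Countable ∧ ∀ i, Set.MapsTo (f i) B B := by
  have := hA.to_subtype
  refine ⟨Set.range fun x : List ι × A ↦ x.1.foldr f x.2, fun a ha ↦ ⟨([], ⟨a, ha⟩), rfl⟩,
    Set.countable_range _, ?_⟩
  rintro i _ ⟨⟨l, a⟩, rfl⟩
  exact ⟨(i :: l, a), rfl⟩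

theorem exists_surjective_eqOn_of_infinite_compl [Countable β] {s : Set α} (hs : sᶜ.Infinite)
    (f : α → β) : ∃ g : α → β, Function.Surjective g ∧ Set.EqOn g f s := by
  obtain ⟨code, hcode⟩ := exists_injective_nat β
  let fresh : β → α := fun b ↦ hs.natEmbedding sᶜ (code b)
  have fresh_injective : Function.Injective fresh :=
    Subtype.val_injective.comp ((hs.natEmbedding sᶜ).injective.comp hcode)
  have fresh_notMem (b : β) : fresh b ∉ s := (hs.natEmbedding sᶜ (code b)).2
  refine ⟨Function.extend fresh id f, fun b ↦ ⟨fresh b, fresh_injective.extend_apply _ _ b⟩, ?_⟩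
  intro a ha
  exact Function.extend_apply' _ _ _ fun ⟨b, hb⟩ ↦ fresh_notMem b (hb ▸ ha)

end Functions

/-- A Gödel numbering of formulas: a constructor tag paired with the code of the arguments. -/
def Form.code : Form → ℕ
  | .prop p => Nat.pair 0 p
  | .nom i => Nat.pair 1 i
  | .rel i j => Nat.pair 2 (Nat.pair i j)
  | .and φ ψ => Nat.pair 3 (Nat.pair φ.code ψ.code)
  | .or φ ψ => Nat.pair 4 (Nat.pair φ.code ψ.code)
  | .imp φ ψ => Nat.pair 5 (Nat.pair φ.code ψ.code)
  | .neg φ => Nat.pair 6 φ.code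
  | .at_ i φ => Nat.pair 7 (Nat.pair i φ.code)
  | .box φ => Nat.pair 8 φ.code
  | .dia φ => Nat.pair 9 φ.code

theorem Form.code_injective : Function.Injective Form.code := by
  intro φ
  induction φ <;> rintro (_ | _) h <;> grind [Form.code, Nat.pair_eq_pair]

instance : Countable Form := Form.code_injective.countable

/-- The nominals occurring in a formula, including those in subscripts `@_i`. -/
def Form.nominals : Form → Finset ℕ
  | .prop _ => ∅
  | .nom i => {i}
  | .rel i j => {i, j}
  | .and φ ψ | .or φ ψ | .imp φ ψ => φ.nominals ∪ ψ.nominals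
  | .neg φ | .box φ | .dia φ => φ.nominals
  | .at_ i φ => insert i φ.nominals

namespace Model

theorem sat_reassign_iff (M : Model) {g : ℕ → M.W} {φ : Form} (hg : Set.EqOn g M.g φ.nominals)
    (w : M.W) : sat { M with g := g } w φ ↔ sat M w φ := by
  induction φ generalizing w with
  | prop p => rfl
  | nom i => simp only [sat, hg (Finset.mem_singleton_self i)]
  | rel i j =>
    have hi : g i = M.g i := hg (Finset.mem_insert_self i {j})
    have hj : g j = M.g j := hg (Finset.mem_insert_of_mem (Finset.mem_singleton_self j))
    simp only [sat, hi, hj]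
  | and φ ψ ihφ ihψ | or φ ψ ihφ ihψ | imp φ ψ ihφ ihψ =>
    simp only [Form.nominals, Finset.coe_union, Set.eqOn_union] at hg
    simp only [sat, ihφ hg.1, ihψ hg.2]
  | neg φ ih | box φ ih | dia φ ih => simp only [sat, ih hg]
  | at_ i φ ih =>
    have hgφ : Set.EqOn g M.g φ.nominals := fun j hj ↦ hg (Finset.mem_insert_of_mem hj)
    simp only [sat, hg (Finset.mem_insert_self i _), ih hgφ]

/-- The submodel of `M` on a set of worlds containing the denotations of all nominals. -/
def restrict (M : Model) (S : Set M.W) (hS : Set.range M.g ⊆ S) : Model where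
  W := S
  ne := ⟨⟨M.g 0, hS ⟨0, rfl⟩⟩⟩
  R u v := M.R u v
  V p u := M.V p u
  g i := ⟨M.g i, hS ⟨i, rfl⟩⟩

/-- The Tarski–Vaught condition: every formula `◇ψ` true at a world of `S` has a witness in `S`. -/
def WitnessClosed (M : Model) (S : Set M.W) : Prop :=
  ∀ ψ, ∀ u ∈ S, sat M u (.dia ψ) → ∃ v ∈ S, M.R u v ∧ sat M v ψ

theorem sat_restrict_iff {M : Model} {S : Set M.W} (hS : Set.range M.g ⊆ S)
    (hw : M.WitnessClosed S) (φ : Form) (u : S) :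
    sat (M.restrict S hS) u φ ↔ sat M u φ := by
  induction φ generalizing u with
  | prop p => rfl
  | nom i => exact Subtype.ext_iff
  | rel i j => rfl
  | and φ ψ ihφ ihψ | or φ ψ ihφ ihψ | imp φ ψ ihφ ihψ => simp only [sat, ihφ, ihψ]
  | neg φ ih => simp only [sat, ih]
  | at_ i _ ih => exact ih ⟨M.g i, hS ⟨i, rfl⟩⟩
  | box φ ih =>
    refine ⟨fun h ↦ ?_, fun h v huv ↦ (ih v).2 (h v.1 huv)⟩
    by_contra hbox
    have hdia : sat M u (.dia (.neg φ)) := by simpa [sat] using hbox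
    obtain ⟨v, hv, huv, hφ⟩ := hw _ u u.2 hdia
    exact hφ ((ih ⟨v, hv⟩).1 (h ⟨v, hv⟩ huv))
  | dia φ ih =>
    constructor
    · rintro ⟨v, huv, hφ⟩
      exact ⟨v.1, huv, (ih v).1 hφ⟩
    · intro h
      obtain ⟨v, hv, huv, hφ⟩ := hw _ u u.2 h
      exact ⟨⟨v, hv⟩, huv, (ih ⟨v, hv⟩).2 hφ⟩

theorem exists_countable_witnessClosed (M : Model) {A : Set M.W} (hA : A.Countable) :
    ∃ S, A ⊆ S ∧ S.Countable ∧ M.WitnessClosed S := by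
  have := M.ne
  let witness (ψ : Form) (u : M.W) : M.W := Classical.epsilon fun v ↦ M.R u v ∧ sat M v ψ
  obtain ⟨S, hAS, hS, hclosed⟩ := exists_countable_superset_forall_mapsTo witness hA
  exact ⟨S, hAS, hS, fun ψ u hu hψ ↦ ⟨witness ψ u, hclosed ψ hu, Classical.epsilon_spec hψ⟩⟩

theorem exists_countable_forall_sat_iff (M : Model) (w : M.W) :
    ∃ (N : Model) (v : N.W), Countable N.W ∧ ∀ φ, sat N v φ ↔ sat M w φ := by
  obtain ⟨S, hAS, hS, hw⟩ :=
    M.exists_countable_witnessClosed ((Set.countable_range M.g).insert w)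
  obtain ⟨hwS, hgS⟩ := Set.insert_subset_iff.1 hAS
  exact ⟨M.restrict S hgS, ⟨w, hwS⟩, hS.to_subtype, fun φ ↦ sat_restrict_iff hgS hw φ ⟨w, hwS⟩⟩

theorem exists_named_reassign (M : Model) [Countable M.W] (φ : Form) :
    ∃ g : ℕ → M.W, Named { M with g := g } ∧ ∀ w, sat { M with g := g } w φ ↔ sat M w φ := by
  obtain ⟨g, hsurj, hg⟩ :=
    exists_surjective_eqOn_of_infinite_compl φ.nominals.finite_toSet.infinite_compl M.g
  exact ⟨g, hsurj, M.sat_reassign_iff hg⟩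

end Model

/-- (Lemma 1) A formula is valid iff it is valid over the class of named models. -/
theorem valid_iff_valid_over_named (φ : Form) :
    Valid φ ↔ ∀ M : Model, M.Named → ∀ w : M.W, sat M w φ := by
  refine ⟨fun h M _ ↦ h M, fun h M w ↦ ?_⟩
  obtain ⟨N, v, _, hN⟩ := M.exists_countable_forall_sat_iff w
  obtain ⟨g, hnamed, hg⟩ := N.exists_named_reassign φ
  exact (hN φ).1 ((hg v).1 (h _ hnamed v))
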